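/- Let d ≥ 1 and r ≥ 1 be integers. There is a constant c(r,d) > 0 such that for every n ∈ ℕ, the family of n^d cubes Q_I = ∏_{k=1}^d [(i_k−1)/n, i_k/n], I = (i_1,…,i_d) ∈ {1,…,n}^d, is γ-shattered by U(C^r[0,1]^d) with respect to Lebesgue measure, with γ = c(r,d) n^{−(r+d)}. -/

import Mathlib

open MeasureTheory

/-- The closed unit cube `[0,1]^d`. -/
def unitCube (d : ℕ) : Set (Fin d → ℝ) := Set.univ.pi fun _ => Set.Icc 0 1

/-- Partial derivative (within the unit cube) in direction `i`. -/
noncomputable def pdermW (d : ℕ) (i : Fin d) (f : (Fin d → ℝ) → ℝ) :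
    (Fin d → ℝ) → ℝ :=
  fun x => fderivWithin ℝ f (unitCube d) x (Pi.single i 1)

/-- Iterated partial derivative (within the unit cube) along a list of coordinates. -/
noncomputable def iterPDW (d : ℕ) : List (Fin d) → ((Fin d → ℝ) → ℝ) → (Fin d → ℝ) → ℝ
  | [], f => f
  | i :: L, f => pdermW d i (iterPDW d L f)

/-- The unit ball `U(C^r[0,1]^d)`: functions with all partial derivatives of total order
at most `r` existing, continuous, and bounded by `1` on the cube. -/
def UCr (d r : ℕ) : Set ((Fin d → ℝ) → ℝ) :=
  {f | ContDiffOn ℝ r f (unitCube d) ∧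
    ∀ L : List (Fin d), L.length ≤ r → ∀ x ∈ unitCube d, |iterPDW d L f x| ≤ 1}

noncomputable def gPD (d : ℕ) : List (Fin d) → ((Fin d → ℝ) → ℝ) → (Fin d → ℝ) → ℝ
  | [], f => f
  | i :: L, f => fun x => fderiv ℝ (gPD d L f) x (Pi.single i 1)

lemma gPD_smooth (d : ℕ) (L : List (Fin d)) (f : (Fin d → ℝ) → ℝ)
    (hf : ContDiff ℝ (⊤ : ℕ∞) f) : ContDiff ℝ (⊤ : ℕ∞) (gPD d L f) := by
  induction L with
  | nil => exact hf
  | cons i L ih =>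
    have h1 : ContDiff ℝ (⊤ : ℕ∞) (fderiv ℝ (gPD d L f)) := ih.fderiv_right (by simp)
    exact h1.clm_apply contDiff_const

lemma uniqueDiffOn_unitCube (d : ℕ) : UniqueDiffOn ℝ (unitCube d) :=
  UniqueDiffOn.univ_pi fun _ => uniqueDiffOn_Icc one_pos

lemma iterPDW_eq (d : ℕ) (L : List (Fin d)) (f : (Fin d → ℝ) → ℝ)
    (hf : ContDiff ℝ (⊤ : ℕ∞) f) : Set.EqOn (iterPDW d L f) (gPD d L f) (unitCube d) := by
  induction L with
  | nil => exact fun x _ => rfl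
  | cons i L ih =>
    intro x hx
    have h1 := ((gPD_smooth d L f hf).differentiable (by simp)) x
    simp only [iterPDW, pdermW, gPD]
    rw [fderivWithin_congr ih (ih hx), h1.fderivWithin (uniqueDiffOn_unitCube d x hx)]

lemma gPD_sum (d : ℕ) (L : List (Fin d)) {ι : Type*} (s : Finset ι) (a : ι → ℝ)
    (g : ι → (Fin d → ℝ) → ℝ) (hg : ∀ i, ContDiff ℝ (⊤ : ℕ∞) (g i)) :
    gPD d L (fun x => ∑ i ∈ s, a i * g i x) = fun x => ∑ i ∈ s, a i * gPD d L (g i) x := by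
  induction L with
  | nil => rfl
  | cons j L ih =>
    funext x
    have h1 : ∀ i, DifferentiableAt ℝ (gPD d L (g i)) x := fun i =>
      ((gPD_smooth d L _ (hg i)).differentiable (by simp)) x
    simp only [gPD]
    rw [ih, fderiv_fun_sum (fun i _ => (h1 i).const_mul (a i))]
    simp only [sum_apply]
    refine Finset.sum_congr rfl fun i _ => ?_
    rw [fderiv_const_mul (h1 i)]
    simp

lemma gPD_scale (d : ℕ) (L : List (Fin d)) (φ : (Fin d → ℝ) → ℝ)
    (hφ : ContDiff ℝ (⊤ : ℕ∞) φ) (t : ℝ) (v : Fin d → ℝ) :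
    gPD d L (fun x => φ (t • x - v)) = fun x => t ^ L.length * gPD d L φ (t • x - v) := by
  induction L with
  | nil => simp [gPD]
  | cons j L ih =>
    funext x
    have h1 : DifferentiableAt ℝ (gPD d L φ) (t • x - v) :=
      ((gPD_smooth d L _ hφ).differentiable (by simp)) _
    have h2 : HasFDerivAt (fun x : Fin d → ℝ => t • x - v)
        (t • ContinuousLinearMap.id ℝ (Fin d → ℝ)) x :=
      ((hasFDerivAt_id x).const_smul t).sub_const v
    have h3 := (h1.hasFDerivAt.comp x h2).const_mul (t ^ L.length)
    simp only [gPD]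
    rw [ih]
    have h4 := h3.fderiv
    simp only [Function.comp_def] at h4
    rw [h4]
    simp [pow_succ]
    ring

lemma gPD_support (d : ℕ) (L : List (Fin d)) (φ : (Fin d → ℝ) → ℝ) :
    tsupport (gPD d L φ) ⊆ tsupport φ := by
  induction L with
  | nil => exact subset_rfl
  | cons j L ih =>
    refine subset_trans ?_ ih
    refine subset_trans ?_ (tsupport_fderiv_subset ℝ (f := gPD d L φ))
    refine closure_mono ?_
    intro x hx
    simp only [Function.mem_support, gPD] at hx ⊢
    intro h
    simp [h] at hx

lemma exists_bump (d : ℕ) : ∃ φ : (Fin d → ℝ) → ℝ, ContDiff ℝ (⊤ : ℕ∞) φ ∧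
    HasCompactSupport φ ∧ (∀ x, x ∈ tsupport φ → ∀ k, 1/6 ≤ x k ∧ x k ≤ 5/6) ∧
    0 < ∫ x, φ x := by
  let b : ContDiffBump (fun _ : Fin d => (1/2 : ℝ)) := ⟨1/4, 1/3, by norm_num, by norm_num⟩
  refine ⟨b, b.contDiff, b.hasCompactSupport, ?_, b.integral_pos⟩
  intro x hx k
  rw [b.tsupport_eq, Metric.mem_closedBall, dist_pi_le_iff b.rOut_pos.le] at hx
  have := hx k
  rw [Real.dist_eq, abs_le] at this
  have h3 : b.rOut = 1/3 := rfl
  rw [h3] at this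
  constructor <;> linarith [this.1, this.2]

lemma gPD_bound (d r : ℕ) (φ : (Fin d → ℝ) → ℝ) (hφ : ContDiff ℝ (⊤ : ℕ∞) φ)
    (hc : HasCompactSupport φ) :
    ∃ M : ℝ, 0 < M ∧ ∀ L : List (Fin d), L.length ≤ r → ∀ x, |gPD d L φ x| ≤ M := by
  have h1 : ∀ L : List (Fin d), ∃ C, ∀ x, ‖gPD d L φ x‖ ≤ C := fun L =>
    (gPD_smooth d L φ hφ).continuous.bounded_above_of_compact_support
      (hc.of_isClosed_subset (isClosed_tsupport _) (gPD_support d L φ))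
  choose C hC using h1
  obtain ⟨M, hM⟩ := ((List.finite_length_le (Fin d) r).image C).bddAbove
  refine ⟨max M 1, by positivity, fun L hL x => ?_⟩
  exact (hC L x).trans ((hM ⟨L, hL, rfl⟩).trans (le_max_left _ _))

lemma sep {n : ℕ} {d : ℕ} {I J : Fin d → Fin n} 
    (h : ∀ k, |((I k : ℕ) : ℝ) - ((J k : ℕ) : ℝ)| < 1) : I = J := by
  funext k
  have := h k
  have h2 : |((I k : ℕ) : ℤ) - ((J k : ℕ) : ℤ)| < 1 := by exact_mod_cast this
  rw [Int.abs_lt_one_iff] at h2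
  ext
  omega

/-- The family of `n^d` congruent subcubes of `[0,1]^d` is `γ`-shattered by
`U(C^r[0,1]^d)` with `γ = c(r,d) n^{-(r+d)}`: for every sign pattern `σ` there is
`f ∈ U(C^r)` with `σ(I) ∫_{Q_I} f ≥ γ` for all `I`. -/
theorem UCr_shatters_subcubes (d r : ℕ) (hd : 1 ≤ d) (hr : 1 ≤ r) :
    ∃ c : ℝ, 0 < c ∧ ∀ n : ℕ, ∀ σ : (Fin d → Fin n) → ℝ,
      (∀ I, σ I = 1 ∨ σ I = -1) →
      ∃ f ∈ UCr d r, ∀ I : Fin d → Fin n,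
        c * (n : ℝ) ^ (-((r : ℝ) + (d : ℝ))) ≤
          σ I * ∫ x in Set.univ.pi fun k =>
            Set.Icc (((I k : ℕ) : ℝ) / n) ((((I k : ℕ) : ℝ) + 1) / n), f x := by
  obtain ⟨φ, hφ, hc, hs, hpos⟩ := exists_bump d
  obtain ⟨M, hM, hb⟩ := gPD_bound d r φ hφ hc
  refine ⟨M⁻¹ * ∫ x, φ x, by positivity, fun n σ hσ => ?_⟩
  let v : (Fin d → Fin n) → (Fin d → ℝ) := fun I k => ((I k : ℕ) : ℝ)
  let g : (Fin d → Fin n) → (Fin d → ℝ) → ℝ := fun I x => φ ((n : ℝ) • x - v I)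
  have hg : ∀ I, ContDiff ℝ (⊤ : ℕ∞) (g I) := fun I =>
    hφ.comp ((contDiff_id.const_smul (n : ℝ)).sub contDiff_const)
  let a : ℝ := M⁻¹ * ((n : ℝ) ^ r)⁻¹
  have ha : 0 ≤ a := by positivity
  let f : (Fin d → ℝ) → ℝ := fun x => ∑ I, (σ I * a) * g I x
  have hf : ContDiff ℝ (⊤ : ℕ∞) f := ContDiff.sum fun I _ => contDiff_const.mul (hg I)
  refine ⟨f, ⟨(hf.of_le (by exact_mod_cast le_top)).contDiffOn, ?_⟩, ?_⟩
  · intro L hL x hx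
    rw [iterPDW_eq d L f hf hx, gPD_sum d L Finset.univ _ g hg]
    beta_reduce
    by_cases hex : ∃ I, gPD d L φ ((n : ℝ) • x - v I) ≠ 0
    · obtain ⟨I, hI⟩ := hex
      have hn : (1 : ℝ) ≤ n := by
        have := (I ⟨0, hd⟩).pos
        exact_mod_cast this
      rw [Finset.sum_eq_single I]
      · simp only [g]
        rw [gPD_scale d L φ hφ]
        have hσ1 : |σ I| = 1 := by rcases hσ I with h | h <;> simp [h]
        have hpw : (n : ℝ) ^ L.length ≤ (n : ℝ) ^ r := pow_le_pow_right₀ hn hL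
        beta_reduce
        rw [abs_mul, abs_mul (σ I) a, abs_mul ((n : ℝ) ^ L.length), hσ1, abs_of_nonneg ha,
          abs_of_nonneg (by positivity : (0 : ℝ) ≤ (n : ℝ) ^ L.length)]
        calc 1 * a * ((n : ℝ) ^ L.length * |gPD d L φ ((n : ℝ) • x - v I)|)
            ≤ 1 * a * ((n : ℝ) ^ r * M) := by
              gcongr
              exact hb L hL _
          _ = 1 := by
              have : (n : ℝ) ^ r ≠ 0 := by positivity
              simp only [a]
              field_simp
      · intro J _ hJ
        simp only [g]
        rw [gPD_scale d L φ hφ]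
        by_contra hne
        have hJ0 : gPD d L φ ((n : ℝ) • x - v J) ≠ 0 := by
          intro h
          simp [h] at hne
        apply hJ
        apply sep
        intro k
        have h1 := hs _ (gPD_support d L φ (subset_tsupport _ hI)) k
        have h2 := hs _ (gPD_support d L φ (subset_tsupport _ hJ0)) k
        simp only [Pi.sub_apply, Pi.smul_apply, smul_eq_mul, v] at h1 h2
        rw [abs_lt]
        constructor <;> linarith [h1.1, h1.2, h2.1, h2.2]
      · simp
    · push Not at hex
      rw [Finset.sum_eq_zero]
      · simp
      · intro I _
        simp only [g]
        rw [gPD_scale d L φ hφ]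
        simp [hex I]
  · intro I
    have hn : (0 : ℝ) < n := by
      have := (I ⟨0, hd⟩).pos
      exact_mod_cast this
    have hmeas : MeasurableSet (Set.univ.pi fun k =>
            Set.Icc (((I k : ℕ) : ℝ) / n) ((((I k : ℕ) : ℝ) + 1) / n)) :=
      MeasurableSet.univ_pi fun k => measurableSet_Icc
    have e1 : ∫ x in Set.univ.pi fun k =>
            Set.Icc (((I k : ℕ) : ℝ) / n) ((((I k : ℕ) : ℝ) + 1) / n), f x =
        ∫ x in Set.univ.pi fun k =>
            Set.Icc (((I k : ℕ) : ℝ) / n) ((((I k : ℕ) : ℝ) + 1) / n), (σ I * a) * g I x := by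
      refine setIntegral_congr_fun hmeas fun x hx => ?_
      simp only [f]
      refine Finset.sum_eq_single I ?_ (by simp)
      intro J _ hJ
      by_contra hne
      have hJ0 : φ ((n : ℝ) • x - v J) ≠ 0 := by
        intro h
        simp [g, h] at hne
      apply hJ
      apply sep
      intro k
      have h2 := hs _ (subset_tsupport _ hJ0) k
      have h1 := hx k (Set.mem_univ k)
      rw [Set.mem_Icc, div_le_iff₀ hn, le_div_iff₀ hn] at h1
      simp only [Pi.sub_apply, Pi.smul_apply, smul_eq_mul, v] at h2
      rw [abs_lt]
      constructor <;> linarith [h1.1, h1.2, h2.1, h2.2]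
    have e2 : ∫ x in Set.univ.pi fun k =>
            Set.Icc (((I k : ℕ) : ℝ) / n) ((((I k : ℕ) : ℝ) + 1) / n), (σ I * a) * g I x =
        ∫ x, (σ I * a) * g I x := by
      refine setIntegral_eq_integral_of_forall_compl_eq_zero fun x hx => ?_
      by_contra hne
      have hJ0 : φ ((n : ℝ) • x - v I) ≠ 0 := by
        intro h
        simp [g, h] at hne
      apply hx
      intro k _
      have h2 := hs _ (subset_tsupport _ hJ0) k
      simp only [Pi.sub_apply, Pi.smul_apply, smul_eq_mul, v] at h2
      rw [Set.mem_Icc, div_le_iff₀ hn, le_div_iff₀ hn]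
      constructor <;> linarith [h2.1, h2.2]
    have e3 : ∫ x, g I x = ((n : ℝ) ^ d)⁻¹ * ∫ x, φ x := by
      have := Measure.integral_comp_smul (volume : Measure (Fin d → ℝ))
        (fun y => φ (y - v I)) (n : ℝ)
      simp only [g]
      rw [this, integral_sub_right_eq_self φ (v I)]
      simp
    rw [e1, e2, integral_const_mul, e3, Real.rpow_neg hn.le, Real.rpow_add hn,
      Real.rpow_natCast, Real.rpow_natCast]
    have hσ2 : σ I * σ I = 1 := by rcases hσ I with h | h <;> simp [h]
    apply le_of_eq
    calc _ = (1 : ℝ) * (a * (((n : ℝ) ^ d)⁻¹ * ∫ x, φ x)) := by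
          simp only [a]
          rw [mul_inv]
          ring
      _ = _ := by
          rw [← hσ2]
          ring
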